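/- Let a, k, n, r be positive integers with n ≥ rk. If 2^a divides r, then χ(KG^r(n,k)_{2^a-stab}) = ⌈(n − r(k−1)) / (r − 1)⌉. -/

import Mathlib

open Finset

/-- A proper `t`-coloring of the Kneser hypergraph `KG^r(F)`: vertices are the members of `F`,
colors are taken in `{1,...,t}`, and no set of `r` pairwise disjoint members of `F`
(an edge) is monochromatic. -/
def IsKneserColoring (n r t : ℕ) (F : Finset (Finset (Fin n)))
    (c : Finset (Fin n) → ℕ) : Prop :=
  (∀ A ∈ F, c A ∈ Finset.Icc 1 t) ∧
    ∀ E : Finset (Finset (Fin n)), E ⊆ F → E.card = r →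
      ((E : Set (Finset (Fin n))).Pairwise fun A B => Disjoint A B) →
      ¬ ∃ i, ∀ A ∈ E, c A = i

/-- The chromatic number of the Kneser hypergraph `KG^r(F)`. -/
noncomputable def kneserChrom (n r : ℕ) (F : Finset (Finset (Fin n))) : ℕ :=
  sInf {t | ∃ c, IsKneserColoring n r t F c}

/-- A subset `A` of `[n]` (identified with `Fin n`) is `s`-stable: any two distinct
elements `i, j ∈ A` satisfy `s ≤ |i - j| ≤ n - s`. -/
def Stable (n s : ℕ) (A : Finset (Fin n)) : Prop :=
  ∀ i ∈ A, ∀ j ∈ A, i ≠ j →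
    s ≤ max i.val j.val - min i.val j.val ∧ max i.val j.val - min i.val j.val ≤ n - s

open Classical in
/-- The vertex set of the `s`-stable Kneser hypergraph `KG^r(n,k)_{s-stab}`:
all `s`-stable `k`-element subsets of `[n]`. -/
noncomputable def stableSets (n s k : ℕ) : Finset (Finset (Fin n)) :=
  Finset.univ.filter fun A => A.card = k ∧ Stable n s A

/-!
Say that `(s, r)` forces monochromatic edges if, whenever `(r - 1) t + r (k - 1) < n`, every
coloring of the `s`-stable `k`-subsets of `[n]` with `t` colors has `r` disjoint sets of the same
color. A stable subset of (the positions in) a stable set is stable with the product of the two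
parameters. So if `(s₁, r₁)` and `(s₂, r₂)` force monochromatic edges, then so does
`(s₁ s₂, r₁ r₂)`: color each `s₁`-stable set of a suitable size by a color which occurs on `r₂` of
its disjoint subsets. As `2 ^ a ∣ r`, only `(1, p)` with `p` prime and `(2, 2)` are left, and these
follow from the `ℤ / p`-Tucker lemma. The lower bound is attained by coloring a set according to the
block of length `r - 1` which contains its least element, with one color for all the last blocks.

For the Tucker lemma, pull back along the equivariant sign map a normalized cocycle that represents
a generator of the cohomology of `ℤ / p`, and evaluate it on the chain in the order complex of the
sign vectors that is built by coning off and symmetrizing alternately. The value is `1`, whereas a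
normalized cochain vanishes on every flag on which two consecutive signs agree.
-/

/-! ### Cochains on finite sequences -/

/-- An `R`-valued cochain on finite sequences of points of `X`. A sequence of length `d + 1` plays
the role of an ordered `d`-simplex, possibly degenerate, and the empty one of the augmentation. -/
abbrev ListCochain (X R : Type*) := List X → R

namespace ListCochain

variable {X Y R : Type*} [AddCommGroup R]

/-- The simplicial coboundary: the alternating sum of `c` over the sequences obtained by deleting
one entry. -/
def coboundary : ListCochain X R → ListCochain X R
  | _, [] => 0
  | c, a :: l => c l - coboundary (c ∘ List.cons a) l

/-- The prism operator of `f`, a chain homotopy between the identity and the pullback by `f`. -/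
def prism (f : X → X) : ListCochain X R → ListCochain X R
  | _, [] => 0
  | c, a :: l => c (a :: (a :: l).map f) - prism f (c ∘ List.cons a) l

/-- The contracting homotopy given by a map `f` joined to the identity on one side and to the
constant map `e` on the other. -/
def cone (e : X) (f : X → X) (c : ListCochain X R) : ListCochain X R :=
  c ∘ List.cons e ∘ List.map f - prism f c

/-- The degree `d` operator of the periodic resolution of the cyclic group of order `p` generated
by `g`: the norm `1 + g + ⋯ + g ^ (p - 1)` in even degrees and `g - 1` in odd degrees. -/
def resolutionOp (p : ℕ) (g : X → X) (d : ℕ) (c : ListCochain X R) : ListCochain X R :=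
  if Even d then ∑ j ∈ range p, c ∘ List.map g^[j] else c ∘ List.map g - c

/-- A cochain is normalized if it vanishes on the sequences with two equal consecutive entries. -/
def IsNormalized (c : ListCochain X R) : Prop :=
  ∀ u a v, c (u ++ a :: a :: v) = 0

theorem coboundary_comp_cons (c : ListCochain X R) (a : X) :
    coboundary c ∘ List.cons a = c - coboundary (c ∘ List.cons a) :=
  rfl

theorem coboundary_sub (c c' : ListCochain X R) :
    coboundary (c - c') = coboundary c - coboundary c' := by
  funext l
  induction l generalizing c c' with
  | nil => simp [coboundary]
  | cons a l ih =>
    simp only [coboundary, Pi.sub_apply, Pi.sub_comp, ih]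
    abel

theorem coboundary_zero : coboundary (0 : ListCochain X R) = 0 := by
  simpa using coboundary_sub (0 : ListCochain X R) 0

theorem coboundary_sum {ι : Type*} (s : Finset ι) (c : ι → ListCochain X R) :
    coboundary (∑ i ∈ s, c i) = ∑ i ∈ s, coboundary (c i) := by
  funext l
  induction l generalizing c with
  | nil => simp [coboundary]
  | cons a l ih =>
    have hcons : (∑ i ∈ s, c i) ∘ List.cons a = ∑ i ∈ s, c i ∘ List.cons a := by
      funext m
      simp
    simp only [coboundary, hcons, ih, Finset.sum_apply, Finset.sum_sub_distrib]

theorem coboundary_comp_map (f : X → Y) (c : ListCochain Y R) :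
    coboundary (c ∘ List.map f) = coboundary c ∘ List.map f := by
  funext l
  induction l generalizing c with
  | nil => rfl
  | cons a l ih => exact congrArg (c (l.map f) - ·) (ih (c ∘ List.cons (f a)))

theorem coboundary_coboundary (c : ListCochain X R) : coboundary (coboundary c) = 0 := by
  funext l
  induction l generalizing c with
  | nil => rfl
  | cons a l ih =>
    simp only [coboundary, coboundary_comp_cons, coboundary_sub, Pi.sub_apply, ih,
      Pi.zero_apply, sub_zero, sub_self]

theorem prism_sub (f : X → X) (c c' : ListCochain X R) :
    prism f (c - c') = prism f c - prism f c' := by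
  funext l
  induction l generalizing c c' with
  | nil => simp [prism]
  | cons a l ih =>
    simp only [prism, Pi.sub_apply, Pi.sub_comp, ih]
    abel

theorem prism_coboundary_add_coboundary_prism (f : X → X) (c : ListCochain X R) :
    prism f (coboundary c) + coboundary (prism f c) = c ∘ List.map f - c := by
  funext l
  induction l generalizing c with
  | nil => simp [coboundary, prism]
  | cons a l ih =>
    have hprism : prism f c ∘ List.cons a =
        c ∘ List.cons a ∘ List.map f ∘ List.cons a - prism f (c ∘ List.cons a) := rfl
    have hmap : c ∘ List.cons a ∘ List.map f ∘ List.cons a =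
        ((c ∘ List.cons a) ∘ List.cons (f a)) ∘ List.map f := rfl
    have hl := ih (c ∘ List.cons a)
    simp only [Pi.add_apply, Pi.sub_apply, Function.comp_apply, prism, coboundary,
      coboundary_comp_cons, hprism, hmap, prism_sub, coboundary_sub, coboundary_comp_map,
      List.map_cons] at hl ⊢
    linear_combination (norm := abel) hl

theorem cone_coboundary (e : X) (f : X → X) (c : ListCochain X R) :
    cone e f (coboundary c) = c - coboundary (cone e f c) := by
  have hcob : coboundary c ∘ List.cons e ∘ List.map f =
      c ∘ List.map f - coboundary (c ∘ List.cons e) ∘ List.map f := rfl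
  have hcone : coboundary (c ∘ List.cons e ∘ List.map f) =
      coboundary (c ∘ List.cons e) ∘ List.map f := coboundary_comp_map f (c ∘ List.cons e)
  rw [cone, cone, hcob, coboundary_sub, hcone,
    eq_sub_of_add_eq (prism_coboundary_add_coboundary_prism f c)]
  abel

theorem cone_sub (e : X) (f : X → X) (c c' : ListCochain X R) :
    cone e f (c - c') = cone e f c - cone e f c' := by
  simp only [cone, prism_sub, Pi.sub_comp]
  abel

theorem prism_eq_zero {f : X → X} {c : ListCochain X R} {l : List X}
    (h : ∀ u a v, l = u ++ a :: v → c (u ++ a :: (a :: v).map f) = 0) : prism f c l = 0 := by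
  induction l generalizing c with
  | nil => rfl
  | cons a l ih =>
    have hhead : c (a :: (a :: l).map f) = 0 := h [] a l rfl
    have htail : prism f (c ∘ List.cons a) l = 0 :=
      ih fun u b v hl => h (a :: u) b v (congrArg (List.cons a) hl)
    rw [prism, hhead, htail, sub_zero]

theorem resolutionOp_of_even {d : ℕ} (hd : Even d) (p : ℕ) (g : X → X) (c : ListCochain X R) :
    resolutionOp p g d c = ∑ j ∈ range p, c ∘ List.map g^[j] :=
  if_pos hd

theorem resolutionOp_of_not_even {d : ℕ} (hd : ¬Even d) (p : ℕ) (g : X → X)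
    (c : ListCochain X R) : resolutionOp p g d c = c ∘ List.map g - c :=
  if_neg hd

theorem resolutionOp_sub (p : ℕ) (g : X → X) (d : ℕ) (c c' : ListCochain X R) :
    resolutionOp p g d (c - c') = resolutionOp p g d c - resolutionOp p g d c' := by
  by_cases hd : Even d
  · simp only [resolutionOp_of_even hd, Pi.sub_comp, Finset.sum_sub_distrib]
  · simp only [resolutionOp_of_not_even hd, Pi.sub_comp]
    abel

theorem resolutionOp_coboundary (p : ℕ) (g : X → X) (d : ℕ) (c : ListCochain X R) :
    resolutionOp p g d (coboundary c) = coboundary (resolutionOp p g d c) := by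
  by_cases hd : Even d
  · simp only [resolutionOp_of_even hd, coboundary_sum, coboundary_comp_map]
  · simp only [resolutionOp_of_not_even hd, coboundary_sub, coboundary_comp_map]

theorem resolutionOp_resolutionOp_succ {p : ℕ} {g : X → X} (hg : g^[p] = id) (d : ℕ)
    (c : ListCochain X R) : resolutionOp p g d (resolutionOp p g (d + 1) c) = 0 := by
  have htelescope (l : List X) :
      ∑ j ∈ range p, (c (l.map g^[j + 1]) - c (l.map g^[j])) = 0 := by
    rw [Finset.sum_range_sub fun j => c (l.map g^[j]), hg]
    simp
  funext l
  by_cases hd : Even d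
  · have hd' : ¬Even (d + 1) := by simpa [Nat.even_add_one] using hd
    simpa only [resolutionOp_of_even hd, resolutionOp_of_not_even hd', Function.iterate_succ',
      Finset.sum_apply, Pi.sub_apply, Pi.zero_apply, Function.comp_apply, List.map_map]
      using htelescope l
  · have hd' : Even (d + 1) := by simpa [Nat.even_add_one] using hd
    simpa only [resolutionOp_of_even hd', resolutionOp_of_not_even hd, Function.iterate_succ,
      Finset.sum_apply, Pi.sub_apply, Pi.zero_apply, Function.comp_apply, List.map_map,
      Finset.sum_sub_distrib]
      using htelescope l

theorem resolutionOp_comp_map {s : X → Y} {g : X → X} {g' : Y → Y}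
    (hs : Function.Semiconj s g g') (p d : ℕ) (c : ListCochain Y R) :
    resolutionOp p g d (c ∘ List.map s) = resolutionOp p g' d c ∘ List.map s := by
  funext l
  by_cases hd : Even d
  · simp [resolutionOp_of_even hd, (hs.iterate_right _).comp_eq]
  · simp [resolutionOp_of_not_even hd, hs.comp_eq]

theorem resolutionOp_apply_eq_zero {g : X → X} {c : ListCochain X R} {l : List X}
    (h : ∀ j, c (l.map g^[j]) = 0) (p d : ℕ) : resolutionOp p g d c l = 0 := by
  have h₀ : c l = 0 := by simpa using h 0
  have h₁ : c (l.map g) = 0 := h 1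
  by_cases hd : Even d
  · simp [resolutionOp_of_even hd, h]
  · simp [resolutionOp_of_not_even hd, h₀, h₁]

theorem IsNormalized.coboundary {c : ListCochain X R} (hc : c.IsNormalized) :
    c.coboundary.IsNormalized := by
  intro u a v
  induction u generalizing c with
  | nil =>
    have hzero : (c ∘ List.cons a) ∘ List.cons a = 0 := funext fun m => hc [] a m
    simp [ListCochain.coboundary, hzero, coboundary_zero]
  | cons x u ih =>
    have hcons : IsNormalized (c ∘ List.cons x) := fun u a v => hc (x :: u) a v
    rw [List.cons_append, ListCochain.coboundary, hc, ih hcons, sub_zero]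

theorem IsNormalized.comp_map {c : ListCochain Y R} (hc : c.IsNormalized) (f : X → Y) :
    IsNormalized (c ∘ List.map f) := by
  intro u a v
  simpa using hc (u.map f) (f a) (v.map f)

section CyclicWords

variable {p : ℕ} [NeZero p]

/-- Solves `b ∘ List.map (· + 1) - b = c`: on a sequence starting with `x`, sum `c` over the
translates starting with `0, …, x - 1`. -/
def antidifference (c : ListCochain (ZMod p) R) : ListCochain (ZMod p) R := fun l =>
  ∑ j ∈ range (l.headD 0).val, c (l.map (· - l.headD 0 + (j : ZMod p)))

omit [NeZero p] in
theorem IsNormalized.antidifference {c : ListCochain (ZMod p) R} (hc : c.IsNormalized) :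
    c.antidifference.IsNormalized := fun u a v =>
  Finset.sum_eq_zero fun _ _ => hc.comp_map _ u a v

theorem antidifference_comp_map_sub {c : ListCochain (ZMod p) R} (hnil : c [] = 0)
    (hsum : ∑ j ∈ range p, c ∘ List.map (· + (j : ZMod p)) = 0) :
    c.antidifference ∘ List.map (· + 1) - c.antidifference = c := by
  funext l
  rcases l with _ | ⟨x, m⟩
  · simp [antidifference, hnil]
  let S (v : ℕ) : R := ∑ j ∈ range v, c ((x :: m).map (· - x + (j : ZMod p)))
  have hl : c.antidifference (x :: m) = S x.val := rfl
  have hl' : c.antidifference ((x :: m).map (· + 1)) = S (x + 1).val := by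
    simp [antidifference, S, Function.comp_def]
  have hSp : S p = 0 := by
    simpa [S, Function.comp_def] using congrFun hsum ((x :: m).map (· - x))
  have hwrap : S (x + 1).val = S (x.val + 1) := by
    have hcast : x + 1 = ((x.val + 1 : ℕ) : ZMod p) := by simp
    rcases (Nat.succ_le_of_lt x.val_lt).lt_or_eq with hx | hx
    · rw [hcast, ZMod.val_natCast_of_lt hx]
    · rw [hcast, ← Nat.succ_eq_add_one, hx, ZMod.natCast_self, ZMod.val_zero, hSp]
      exact Finset.sum_range_zero _
  have hlast : S (x.val + 1) = S x.val + c (x :: m) := by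
    simp only [S, Finset.sum_range_succ]
    simp
  simp only [Pi.sub_apply, Function.comp_apply]
  rw [hl, hl', hwrap, hlast, add_sub_cancel_left]

theorem sum_comp_map_restrict_head {c : ListCochain (ZMod p) R} (hnil : c [] = 0)
    (hinv : c ∘ List.map (· + 1) = c) :
    (∑ j ∈ range p, (fun l => if l.head? = some 0 then c l else 0) ∘
      List.map (· + (j : ZMod p)) : ListCochain (ZMod p) R) = c := by
  have hinv' (j : ℕ) (l : List (ZMod p)) : c (l.map (· + (j : ZMod p))) = c l := by
    induction j with
    | zero => simp
    | succ j ih =>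
      have hstep := congrFun hinv (l.map (· + (j : ZMod p)))
      rw [ih] at hstep
      simpa [Function.comp_def, add_assoc] using hstep
  funext l
  rcases l with _ | ⟨x, m⟩
  · simp [hnil]
  have hunique : ∀ j ∈ range p, j ≠ (-x).val → x + (j : ZMod p) ≠ 0 := by
    intro j hj hjx h
    rw [← eq_neg_of_add_eq_zero_right h, ZMod.val_natCast_of_lt (mem_range.1 hj)] at hjx
    exact hjx rfl
  simp only [Finset.sum_apply, Function.comp_apply, hinv', List.head?_map, List.head?_cons,
    Option.map_some, Option.some.injEq]
  rw [Finset.sum_eq_single_of_mem _ (mem_range.2 (ZMod.val_lt (-x)))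
    fun j hj hjx => if_neg (hunique j hj hjx)]
  exact if_pos (by simp)

theorem exists_resolutionOp_succ_eq {d : ℕ} {c : ListCochain (ZMod p) R} (hc : c.IsNormalized)
    (hnil : c [] = 0) (hd : resolutionOp p (· + 1) d c = 0) :
    ∃ b : ListCochain (ZMod p) R, b.IsNormalized ∧ resolutionOp p (· + 1) (d + 1) b = c := by
  by_cases heven : Even d
  · have hodd : ¬Even (d + 1) := by simpa [Nat.even_add_one] using heven
    refine ⟨c.antidifference, hc.antidifference, ?_⟩
    rw [resolutionOp_of_not_even hodd]
    refine antidifference_comp_map_sub hnil ?_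
    simpa [resolutionOp_of_even heven] using hd
  · have heven' : Even (d + 1) := by simpa [Nat.even_add_one] using heven
    refine ⟨fun l => if l.head? = some 0 then c l else 0, fun _ _ _ => by simp [hc _ _ _], ?_⟩
    rw [resolutionOp_of_not_even heven, sub_eq_zero] at hd
    simpa [resolutionOp_of_even heven'] using sum_comp_map_restrict_head hnil hd

end CyclicWords

end ListCochain

/-- A sequence of `g`-invariant subsets of a preorder, of length `N`, each of which is contractible
inside the next one through the chain of inequalities `x ≤ push d x ≥ apex (d + 1)`. It plays the
role of the skeleta of a contractible order complex. -/
structure ConeTower (X : Type*) [Preorder X] (g : X →o X) (N : ℕ) where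
  level : ℕ → Set X
  apex : ℕ → X
  push : ℕ → X → X
  level_mono : Monotone level
  map_mem : ∀ {d x}, x ∈ level d → g x ∈ level d
  apex_mem : ∀ {d}, d < N → apex d ∈ level d
  push_mem : ∀ {d x}, d + 1 < N → x ∈ level d → push d x ∈ level (d + 1)
  push_mono : ∀ d, Monotone (push d)
  le_push : ∀ {d x}, d + 1 < N → x ∈ level d → x ≤ push d x
  apex_le_push : ∀ {d x}, d + 1 < N → x ∈ level d → apex (d + 1) ≤ push d x

namespace ConeTower

open ListCochain

variable {X : Type*} [Preorder X] {g : X →o X} {N : ℕ} {R : Type*} [AddCommGroup R]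

/-- A flag of dimension `d`: a weakly increasing sequence of `d + 1` points of the level `d`. -/
structure IsFlag (T : ConeTower X g N) (d : ℕ) (l : List X) : Prop where
  length_eq : l.length = d + 1
  mem_level : ∀ x ∈ l, x ∈ T.level d
  pairwise_le : l.Pairwise (· ≤ ·)

theorem IsFlag.map_iterate {T : ConeTower X g N} {d : ℕ} {l : List X} (h : T.IsFlag d l) (j : ℕ) :
    T.IsFlag d (l.map g^[j]) where
  length_eq := by rw [List.length_map, h.length_eq]
  mem_level := List.forall_mem_map.2 fun x hx =>
    Set.MapsTo.iterate (fun _ => T.map_mem) j (h.mem_level x hx)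
  pairwise_le := List.pairwise_map.2 (h.pairwise_le.imp fun hxy => g.monotone.iterate j hxy)

theorem IsFlag.apex_cons {T : ConeTower X g N} {d : ℕ} {l : List X} (h : T.IsFlag d l)
    (hd : d + 1 < N) : T.IsFlag (d + 1) (T.apex (d + 1) :: l.map (T.push d)) where
  length_eq := by rw [List.length_cons, List.length_map, h.length_eq]
  mem_level := List.forall_mem_cons.2
    ⟨T.apex_mem hd, List.forall_mem_map.2 fun x hx => T.push_mem hd (h.mem_level x hx)⟩
  pairwise_le := List.pairwise_cons.2
    ⟨List.forall_mem_map.2 fun x hx => T.apex_le_push hd (h.mem_level x hx),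
      List.pairwise_map.2 (h.pairwise_le.imp fun hxy => T.push_mono d hxy)⟩

theorem IsFlag.append_cons_map_push {T : ConeTower X g N} {d : ℕ} {u v : List X} {a : X}
    (h : T.IsFlag d (u ++ a :: v)) (hd : d + 1 < N) :
    T.IsFlag (d + 1) (u ++ a :: (a :: v).map (T.push d)) := by
  obtain ⟨hlength, hmem, hpairwise⟩ := h
  simp only [List.forall_mem_append] at hmem
  rw [List.pairwise_append] at hpairwise
  obtain ⟨hmem_u, hmem_av⟩ := hmem
  obtain ⟨hu, hav, huav⟩ := hpairwise
  have ha : ∀ y ∈ a :: v, a ≤ y :=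
    List.forall_mem_cons.2 ⟨le_rfl, (List.pairwise_cons.1 hav).1⟩
  have hpush {x y : X} (hy : y ∈ a :: v) (hxy : x ≤ y) : x ≤ T.push d y :=
    hxy.trans (T.le_push hd (hmem_av y hy))
  refine ⟨by simp at hlength ⊢; omega, ?_, List.pairwise_append.2 ⟨hu, ?_, ?_⟩⟩
  · simp only [List.forall_mem_append, List.forall_mem_cons (a := a)]
    exact ⟨fun x hx => T.level_mono d.le_succ (hmem_u x hx),
      T.level_mono d.le_succ (hmem_av a List.mem_cons_self),
      List.forall_mem_map.2 fun y hy => T.push_mem hd (hmem_av y hy)⟩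
  · exact List.pairwise_cons.2 ⟨List.forall_mem_map.2 fun y hy => hpush hy (ha y hy),
      List.pairwise_map.2 (hav.imp fun hxy => T.push_mono d hxy)⟩
  · exact fun x hx => List.forall_mem_cons.2 ⟨huav x hx a List.mem_cons_self,
      List.forall_mem_map.2 fun y hy => hpush hy (huav x hx y hy)⟩

/-- The value of a cochain on the fundamental chain of dimension `d` of the tower, which is built
by coning off and then applying the operators of the periodic resolution of `ℤ / p`. -/
def eval (T : ConeTower X g N) (p : ℕ) : ℕ → ListCochain X R → R
  | 0, c => c [T.apex 0]
  | d + 1, c => T.eval p d (resolutionOp p g (d + 1) (cone (T.apex (d + 1)) (T.push d) c))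

theorem eval_sub (T : ConeTower X g N) (p d : ℕ) (c c' : ListCochain X R) :
    T.eval p d (c - c') = T.eval p d c - T.eval p d c' := by
  induction d generalizing c c' with
  | zero => rfl
  | succ d ih => simp only [eval, cone_sub, resolutionOp_sub, ih]

theorem eval_zero (T : ConeTower X g N) (p d : ℕ) : T.eval p d (0 : ListCochain X R) = 0 := by
  simpa using T.eval_sub p d (0 : ListCochain X R) 0

theorem eval_succ_coboundary (T : ConeTower X g N) {p : ℕ} (hg : g^[p] = id) (d : ℕ)
    (c : ListCochain X R) :
    T.eval p (d + 1) (coboundary c) = T.eval p d (resolutionOp p g (d + 1) c) := by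
  have hcone (d : ℕ) (e : X) (f : X → X) (c : ListCochain X R) :
      resolutionOp p g d (cone e f (coboundary c)) =
        resolutionOp p g d c - coboundary (resolutionOp p g d (cone e f c)) := by
    rw [cone_coboundary, resolutionOp_sub, resolutionOp_coboundary]
  induction d generalizing c with
  | zero =>
    simp only [eval, hcone, Pi.sub_apply, sub_eq_self]
    simp [coboundary, resolutionOp_of_not_even (d := 1) (by decide)]
  | succ d ih =>
    rw [eval, hcone, eval_sub, ih, resolutionOp_resolutionOp_succ hg, eval_zero, sub_zero]

theorem eval_eq_zero (T : ConeTower X g N) (p : ℕ) {d : ℕ} (hd : d < N) {c : ListCochain X R}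
    (hc : ∀ l, T.IsFlag d l → c l = 0) : T.eval p d c = 0 := by
  induction d generalizing c with
  | zero => exact hc _ ⟨rfl, by simpa using T.apex_mem hd, List.pairwise_singleton _ _⟩
  | succ d ih =>
    have hcone {l : List X} (hl : T.IsFlag d l) :
        cone (T.apex (d + 1)) (T.push d) c l = 0 := by
      have hprism : prism (T.push d) c l = 0 :=
        prism_eq_zero fun u a v huav => hc _ ((huav ▸ hl).append_cons_map_push hd)
      rw [cone, Pi.sub_apply, hprism, sub_zero]
      exact hc _ (hl.apex_cons hd)
    exact ih (by omega) fun l hl =>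
      resolutionOp_apply_eq_zero (fun j => hcone (hl.map_iterate j)) p (d + 1)

theorem exists_cochain_eval_comp_map_eq_one (T : ConeTower X g N) {p : ℕ} [NeZero p]
    (hg : g^[p] = id) {s : X → ZMod p} (hs : Function.Semiconj s g (· + 1)) (d : ℕ) :
    ∃ c : ListCochain (ZMod p) (ZMod p), c.IsNormalized ∧ c [] = 0 ∧ coboundary c = 0 ∧
      resolutionOp p (· + 1) d c = 0 ∧ T.eval p d (c ∘ List.map s) = 1 := by
  induction d with
  | zero =>
    let ε : ListCochain (ZMod p) (ZMod p) := fun l => if l = [] then 1 else 0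
    have hε : ε.IsNormalized := fun u a v => if_neg (by simp)
    have hnorm : resolutionOp p (· + 1) 0 ε = 0 := by
      funext l
      simp [resolutionOp_of_even, ε]
    refine ⟨coboundary ε, hε.coboundary, rfl, coboundary_coboundary ε, ?_, ?_⟩
    · rw [resolutionOp_coboundary, hnorm, coboundary_zero]
    · simp [eval, coboundary, ε]
  | succ d ih =>
    obtain ⟨c, hc, hnil, hcocycle, hd, heval⟩ := ih
    obtain ⟨b, hb, rfl⟩ := exists_resolutionOp_succ_eq hc hnil hd
    refine ⟨coboundary b, hb.coboundary, rfl, coboundary_coboundary b, ?_, ?_⟩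
    · rw [resolutionOp_coboundary, hcocycle]
    · rw [← coboundary_comp_map, T.eval_succ_coboundary hg, resolutionOp_comp_map hs, heval]

theorem exists_alternating_flag (T : ConeTower X g N) {p : ℕ} (hp : 2 ≤ p) (hg : g^[p] = id)
    {s : X → ZMod p} (hs : Function.Semiconj s g (· + 1)) {d : ℕ} (hd : d < N) :
    ∃ l, T.IsFlag d l ∧ (l.map s).IsChain (· ≠ ·) := by
  have : Fact (1 < p) := ⟨hp⟩
  have : NeZero p := ⟨by omega⟩
  obtain ⟨c, hc, -, -, -, heval⟩ := T.exists_cochain_eval_comp_map_eq_one hg hs d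
  by_contra! hflag
  have hvanish : ∀ l, T.IsFlag d l → (c ∘ List.map s) l = 0 := by
    intro l hl
    have hchain := hflag l hl
    rw [List.isChain_iff_forall_rel_of_append_cons_cons] at hchain
    push Not at hchain
    obtain ⟨a, b, u, v, huv, rfl⟩ := hchain
    rw [Function.comp_apply, huv]
    exact hc u a v
  exact one_ne_zero (heval.symm.trans (T.eval_eq_zero p hd hvanish))

end ConeTower

/-! ### Sign vectors and the `ℤ / p`-Tucker lemma -/

/-- A nonzero sign vector: a partial map from `[n]` to `ℤ / p` with nonempty domain, or
equivalently an ordered family of `p` disjoint subsets of `[n]`, not all of them empty. -/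
def SignVector (n p : ℕ) := {A : Fin n → Option (ZMod p) // ∃ i, A i ≠ none}

namespace SignVector

variable {n p : ℕ}

instance : CoeFun (SignVector n p) fun _ => Fin n → Option (ZMod p) := ⟨Subtype.val⟩

instance : Preorder (SignVector n p) where
  le A B := ∀ i x, A i = some x → B i = some x
  le_refl _ _ _ := id
  le_trans _ _ _ hAB hBC i x := hBC i x ∘ hAB i x

/-- The cyclic shift of the signs, which generates the action of `ℤ / p`. -/
def rotate : SignVector n p →o SignVector n p where
  toFun A := ⟨fun i => (A i).map (· + 1), A.2.imp fun _ => Option.map_eq_none_iff.not.2⟩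
  monotone' A B hAB i x hx := by
    obtain ⟨y, hy, rfl⟩ := Option.map_eq_some_iff.1 hx
    exact Option.map_eq_some_iff.2 ⟨y, hAB i y hy, rfl⟩

theorem rotate_apply (A : SignVector n p) (i : Fin n) : rotate A i = (A i).map (· + 1) :=
  rfl

theorem rotate_iterate_apply (j : ℕ) (A : SignVector n p) (i : Fin n) :
    (rotate^[j] A) i = (A i).map (· + (j : ZMod p)) := by
  induction j with
  | zero => simp
  | succ j ih =>
    rw [Function.iterate_succ_apply', rotate_apply, ih]
    simp [Function.comp_def, add_assoc]

theorem rotate_iterate_self : (rotate : SignVector n p →o _)^[p] = id := by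
  funext A
  refine Subtype.ext (funext fun i => ?_)
  rw [rotate_iterate_apply]
  simp

/-- The sign vector obtained from a possibly zero one by giving `m` the sign `0`. -/
def setZero (m : Fin n) (A : Fin n → Option (ZMod p)) : SignVector n p :=
  ⟨Function.update A m (some 0), m, by simp⟩

theorem setZero_mono (m : Fin n) {A B : Fin n → Option (ZMod p)}
    (hAB : ∀ i x, A i = some x → B i = some x) : setZero m A ≤ setZero m B := by
  intro i x hx
  by_cases him : i = m
  · simpa [setZero, him] using hx
  · simpa [setZero, him] using hAB i x (by simpa [setZero, him] using hx)

theorem le_setZero {m : Fin n} {A : SignVector n p} (hm : A m = none) : A ≤ setZero m A := by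
  intro i x hx
  have him : i ≠ m := by rintro rfl; simp [hm] at hx
  simpa [setZero, him] using hx

theorem setZero_apply_ne_none {m : Fin n} {A : Fin n → Option (ZMod p)} {d : ℕ} (hm : m.val ≤ d)
    (hA : ∀ i, A i ≠ none → i.val ≤ d) (i : Fin n) (hi : setZero m A i ≠ none) : i.val ≤ d := by
  by_cases him : i = m
  · rwa [him]
  · exact hA i (by simpa [setZero, him] using hi)

variable (n p) in
/-- The sign vectors supported on `{0, …, d}` form the `d`-th level of a tower in which one cones
off by giving `d + 1` the sign `0`. -/
def coneTower [NeZero n] : ConeTower (SignVector n p) rotate n where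
  level d := {A | ∀ i, A i ≠ none → i.val ≤ d}
  apex d := setZero (Fin.ofNat n d) fun _ => none
  push d A := setZero (Fin.ofNat n (d + 1)) A
  level_mono _ _ hde _ hA i hi := (hA i hi).trans hde
  map_mem hA i hi := hA i (Option.map_eq_none_iff.not.1 hi)
  apex_mem _ := setZero_apply_ne_none (Nat.mod_le _ _) fun _ h => absurd rfl h
  push_mem _ hA := setZero_apply_ne_none (Nat.mod_le _ _) fun i hi =>
    (hA i hi).trans (Nat.le_succ _)
  push_mono _ _ _ hAB := setZero_mono _ hAB
  le_push {d A} hd hA := le_setZero <| by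
    by_contra hne
    have hle := hA _ hne
    simp [Nat.mod_eq_of_lt hd] at hle
  apex_le_push _ _ := setZero_mono _ fun _ _ h => by simp at h

/-- The `ℤ / p`-Tucker lemma. -/
theorem le_card_of_lt_of_sign_ne (hp : 2 ≤ p) {s : SignVector n p → ZMod p}
    (hs : Function.Semiconj s rotate (· + 1)) {γ : Type*} [Preorder γ] {ρ : SignVector n p → γ}
    (hρ : ∀ A B, A ≤ B → s A ≠ s B → ρ A < ρ B) {T : Finset γ} (hT : ∀ A, ρ A ∈ T) : n ≤ #T := by
  classical
  rcases n.eq_zero_or_pos with rfl | hn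
  · exact Nat.zero_le _
  have : NeZero n := ⟨hn.ne'⟩
  obtain ⟨l, hl, halt⟩ :=
    (coneTower n p).exists_alternating_flag hp rotate_iterate_self hs (Nat.sub_one_lt_of_lt hn)
  have hchain : (l.map ρ).IsChain (· < ·) := by
    rw [List.isChain_map] at halt ⊢
    have hle := hl.pairwise_le.isChain
    rw [List.isChain_iff_forall_rel_of_append_cons_cons] at halt hle ⊢
    exact fun A B u v h => hρ A B (hle h) (halt h)
  have hnodup : (l.map ρ).Nodup := (List.isChain_iff_pairwise.1 hchain).imp fun h => h.ne
  calc n = (l.map ρ).length := by rw [List.length_map, hl.length_eq, Nat.sub_add_cancel hn]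
    _ = #(l.map ρ).toFinset := (List.toFinset_card_of_nodup hnodup).symm
    _ ≤ #T := card_le_card fun x hx => by
      obtain ⟨A, -, rfl⟩ := List.mem_map.1 (List.mem_toFinset.1 hx)
      exact hT A

/-- The sequence of the signs of `A`, read from left to right. -/
def word (A : SignVector n p) : List (ZMod p) :=
  (List.finRange n).filterMap A

theorem word_ne_nil (A : SignVector n p) : A.word ≠ [] := by
  obtain ⟨i, hi⟩ := A.2
  exact fun h => hi (List.filterMap_eq_nil_iff.1 h i (List.mem_finRange i))

theorem word_rotate (A : SignVector n p) : (rotate A).word = A.word.map (· + 1) :=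
  List.map_filterMap.symm

theorem word_sublist_word {A B : SignVector n p} (hAB : A ≤ B) : A.word.Sublist B.word := by
  have hfilterMap (l : List (Fin n)) : (l.filterMap A).Sublist (l.filterMap B) := by
    induction l with
    | nil => exact .slnil
    | cons i l ih =>
      rcases hA : A i with _ | x
      · rw [List.filterMap_cons_none hA]
        exact ih.trans ((List.sublist_cons_self i l).filterMap B)
      · rw [List.filterMap_cons_some hA, List.filterMap_cons_some (hAB i x hA)]
        exact ih.cons_cons x
  exact hfilterMap _

theorem exists_strictMono_of_sublist_word {A : SignVector n p} {w : List (ZMod p)}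
    (hw : w.Sublist A.word) :
    ∃ f : Fin w.length → Fin n, StrictMono f ∧ ∀ i, A (f i) = some (w.get i) := by
  have hsome : (w.map some).Sublist ((List.finRange n).map A) := by
    refine (hw.map some).trans ?_
    rw [word, List.map_filterMap_some_eq_filter_map_isSome]
    exact List.filter_sublist
  obtain ⟨l, hl, hwl⟩ := List.sublist_map_iff.1 hsome
  have hlength : w.length = l.length := by simpa using congrArg List.length hwl
  refine ⟨l.get ∘ Fin.cast hlength, ?_, fun i => ?_⟩
  · exact ((List.pairwise_lt_finRange n).sublist hl).sortedLT.strictMono_get.comp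
      (Fin.cast_strictMono hlength)
  · simpa using (List.getElem_of_eq hwl (i := i) (by simp)).symm

/-- The leftmost sign of `A`. -/
def firstSign (A : SignVector n p) : ZMod p :=
  A.word.head A.word_ne_nil

theorem firstSign_rotate (A : SignVector n p) : (rotate A).firstSign = A.firstSign + 1 := by
  simp only [firstSign, word_rotate, List.head_map]

end SignVector

/-- A rank function on words which can label the small sign vectors in an application of the
`ℤ / p`-Tucker lemma, with the first letter as the sign: it is invariant under the rotation, and
passing to a word containing the given one either increases it or keeps the first letter. -/
structure IsSignRank {p : ℕ} (α : List (ZMod p) → ℕ) : Prop where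
  map_add_one : ∀ u, α (u.map (· + 1)) = α u
  mono : ∀ {u v}, u.Sublist v → α u ≤ α v
  head?_eq : ∀ {u v}, u.Sublist v → α u = α v → u.head? = v.head?

namespace IsSignRank

variable {p : ℕ} {α : List (ZMod p) → ℕ}

theorem pos (hα : IsSignRank α) {w : List (ZMod p)} (hw : w ≠ []) : 0 < α w := by
  refine (Nat.zero_le _).trans_lt ((hα.mono w.nil_sublist).lt_of_ne fun h => hw ?_)
  exact List.head?_eq_none_iff.1 (hα.head?_eq w.nil_sublist h).symm

theorem firstSign_eq (hα : IsSignRank α) {n : ℕ} {A B : SignVector n p} (hAB : A ≤ B)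
    (h : α A.word = α B.word) : A.firstSign = B.firstSign := by
  have hhead := hα.head?_eq (SignVector.word_sublist_word hAB) h
  rwa [List.head?_eq_some_head A.word_ne_nil, List.head?_eq_some_head B.word_ne_nil,
    Option.some_inj] at hhead

end IsSignRank

theorem isSignRank_length {p : ℕ} : IsSignRank (List.length (α := ZMod p)) where
  map_add_one _ := List.length_map _
  mono huv := huv.length_le
  head?_eq huv h := by rw [huv.eq_of_length h]

theorem isSignRank_length_destutter_ne {p : ℕ} :
    IsSignRank fun w : List (ZMod p) => (w.destutter (· ≠ ·)).length where
  map_add_one w := by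
    have hmap := List.map_destutter_ne (l := w) (add_left_injective 1)
    rw [← hmap, List.length_map]
  mono huv := (List.isChain_destutter _ _).length_le_length_destutter_ne
    ((List.destutter_sublist _ _).trans huv)
  head?_eq {u v} huv h := by
    rcases u with _ | ⟨a, u⟩
    · have hv : v.destutter (· ≠ ·) = [] := List.length_eq_zero_iff.1 h.symm
      rw [(List.destutter_eq_nil _).1 hv]
    rcases v with _ | ⟨b, v⟩
    · cases huv
    by_contra hab
    replace hab : a ≠ b := by simpa using hab
    have hchain : (b :: (a :: u).destutter (· ≠ ·)).IsChain (· ≠ ·) :=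
      List.isChain_cons_destutter'_of_rel _ _ (Ne.symm hab)
    have hsub : (b :: (a :: u).destutter (· ≠ ·)).Sublist (b :: v) :=
      ((List.destutter_sublist _ _).trans (huv.of_cons_of_ne hab)).cons_cons b
    have hlength := hchain.length_le_length_destutter_ne hsub
    rw [List.length_cons, h] at hlength
    omega

/-! ### Colorings without monochromatic edges -/

/-- The average of a finite subset of a field; it is `0` if the cardinality vanishes there. -/
def average {K : Type*} [Field K] (s : Finset K) : K :=
  (∑ x ∈ s, x) / #s

theorem average_image_add_one {K : Type*} [Field K] [DecidableEq K] {s : Finset K}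
    (hs : (#s : K) ≠ 0) : average (s.image (· + 1)) = average s + 1 := by
  have hinj : Function.Injective (· + 1 : K → K) := add_left_injective 1
  rw [average, average, card_image_of_injective s hinj, sum_image hinj.injOn, sum_add_distrib,
    sum_const, nsmul_one, add_div, div_self hs]

/-- The sign of a family of subsets of `ℤ / p`, not all of them empty: the average of the first
nonempty one. -/
noncomputable def familySign {p : ℕ} [Fact p.Prime] (S : ℕ → Finset (ZMod p)) : ZMod p :=
  average (S (sInf {j | (S j).Nonempty}))

theorem familySign_image_add_one {p : ℕ} [Fact p.Prime] {S : ℕ → Finset (ZMod p)}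
    (hproper : ∀ j, S j ≠ univ) (hne : ∃ j, (S j).Nonempty) :
    familySign (fun j => (S j).image (· + 1)) = familySign S + 1 := by
  have hmin : (S (sInf {j | (S j).Nonempty})).Nonempty := Nat.sInf_mem hne
  simp only [familySign, image_nonempty]
  refine average_image_add_one fun hzero => ?_
  rw [ZMod.natCast_eq_zero_iff] at hzero
  have hlt := (card_lt_iff_ne_univ _).2 (hproper (sInf {j | (S j).Nonempty}))
  rw [ZMod.card] at hlt
  exact (Nat.le_of_dvd hmin.card_pos hzero).not_gt hlt

/-- There is an edge of the Kneser hypergraph of `F`, indexed by `ι`, all of whose vertices have the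
color `x`. -/
def HasMonochromaticEdge {n : ℕ} (ι : Type*) (F : Finset (Finset (Fin n)))
    (c : Finset (Fin n) → ℕ) (x : ℕ) : Prop :=
  ∃ f : ι → Finset (Fin n), (∀ i, f i ∈ F) ∧ Pairwise (Function.onFun Disjoint f) ∧ ∀ i, c (f i) = x

theorem HasMonochromaticEdge.of_equiv {n x : ℕ} {ι κ : Type*} {F : Finset (Finset (Fin n))}
    {c : Finset (Fin n) → ℕ} (h : HasMonochromaticEdge ι F c x) (e : κ ≃ ι) :
    HasMonochromaticEdge κ F c x := by
  obtain ⟨f, hF, hdisj, hx⟩ := h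
  exact ⟨f ∘ e, fun i => hF (e i), hdisj.comp_of_injective e.injective, fun i => hx (e i)⟩

namespace SignVector

variable {n p : ℕ} [NeZero p] {F : Finset (Finset (Fin n))} {c : Finset (Fin n) → ℕ}
  {T : Finset ℕ}

open Classical in
/-- The signs that `A` takes constantly on some member of `F` of color `j`. -/
noncomputable def colorSigns (F : Finset (Finset (Fin n))) (c : Finset (Fin n) → ℕ)
    (A : SignVector n p) (j : ℕ) : Finset (ZMod p) :=
  {x | ∃ B ∈ F, c B = j ∧ ∀ i ∈ B, A i = some x}

theorem mem_colorSigns {A : SignVector n p} {j : ℕ} {x : ZMod p} :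
    x ∈ A.colorSigns F c j ↔ ∃ B ∈ F, c B = j ∧ ∀ i ∈ B, A i = some x := by
  simp [colorSigns]

theorem colorSigns_mono {A B : SignVector n p} (hAB : A ≤ B) (j : ℕ) :
    A.colorSigns F c j ⊆ B.colorSigns F c j := by
  intro x hx
  obtain ⟨C, hC, hj, hx⟩ := mem_colorSigns.1 hx
  exact mem_colorSigns.2 ⟨C, hC, hj, fun i hi => hAB i x (hx i hi)⟩

theorem colorSigns_rotate (A : SignVector n p) :
    (rotate A).colorSigns F c = fun j => (A.colorSigns F c j).image (· + 1) := by
  funext j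
  ext x
  have hshift (i : Fin n) : rotate A i = some x ↔ A i = some (x - 1) := by
    rw [rotate_apply, Option.map_eq_some_iff]
    simp only [← eq_sub_iff_add_eq, exists_eq_right]
  simp only [mem_image, ← eq_sub_iff_add_eq, exists_eq_right, mem_colorSigns, hshift]

theorem colorSigns_ne_univ (hedge : ∀ x, ¬HasMonochromaticEdge (ZMod p) F c x)
    (A : SignVector n p) (j : ℕ) : A.colorSigns F c j ≠ univ := by
  intro huniv
  have hall (x : ZMod p) : ∃ B ∈ F, c B = j ∧ ∀ i ∈ B, A i = some x :=
    mem_colorSigns.1 (huniv ▸ mem_univ x)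
  choose f hF hcolor hsign using hall
  refine hedge j ⟨f, hF, fun x y hxy => disjoint_left.2 fun i hx hy => hxy ?_, hcolor⟩
  exact Option.some_injective _ ((hsign x i hx).symm.trans (hsign y i hy))

theorem colorSigns_eq_empty (hc : ∀ B ∈ F, c B ∈ T) (A : SignVector n p) {j : ℕ} (hj : j ∉ T) :
    A.colorSigns F c j = ∅ := by
  refine eq_empty_of_forall_notMem fun x hx => hj ?_
  obtain ⟨B, hB, rfl, -⟩ := mem_colorSigns.1 hx
  exact hc B hB

theorem card_le_sum_card_colorSigns (hc : ∀ B ∈ F, c B ∈ T) {A : SignVector n p}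
    {U : Finset (ZMod p)} (hU : ∀ x ∈ U, ∃ B ∈ F, ∀ i ∈ B, A i = some x) :
    #U ≤ ∑ j ∈ T, #(A.colorSigns F c j) := by
  refine (card_le_card fun x hx => ?_).trans card_biUnion_le
  obtain ⟨B, hB, hx⟩ := hU x hx
  exact mem_biUnion.2 ⟨c B, hc B hB, mem_colorSigns.2 ⟨B, hB, rfl, hx⟩⟩

theorem sum_card_colorSigns_le (hedge : ∀ x, ¬HasMonochromaticEdge (ZMod p) F c x)
    (A : SignVector n p) : ∑ j ∈ T, #(A.colorSigns F c j) ≤ (p - 1) * #T := by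
  rw [mul_comm, ← smul_eq_mul]
  refine sum_le_card_nsmul _ _ _ fun j _ => Nat.le_sub_one_of_lt ?_
  simpa using (card_lt_iff_ne_univ _).2 (colorSigns_ne_univ hedge A j)

theorem sum_card_colorSigns_lt (hc : ∀ B ∈ F, c B ∈ T) {A B : SignVector n p} (hAB : A ≤ B)
    (hne : A.colorSigns F c ≠ B.colorSigns F c) :
    ∑ j ∈ T, #(A.colorSigns F c j) < ∑ j ∈ T, #(B.colorSigns F c j) := by
  obtain ⟨j, hj⟩ := Function.ne_iff.1 hne
  have hjT : j ∈ T := by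
    by_contra hjT
    exact hj ((colorSigns_eq_empty hc A hjT).trans (colorSigns_eq_empty hc B hjT).symm)
  exact sum_lt_sum (fun i _ => card_le_card (colorSigns_mono hAB i))
    ⟨j, hjT, card_lt_card ((colorSigns_mono hAB j).ssubset_of_ne hj)⟩

/-- The absolute value of the label of `A` in the application of the `ℤ / p`-Tucker lemma: the rank
of the word of `A` if it is at most `M`, and otherwise `M` plus the number of pairs of a sign and a
color such that the sign is constant on some member of `F` of that color. -/
noncomputable def tuckerRank (α : List (ZMod p) → ℕ) (M : ℕ) (F : Finset (Finset (Fin n)))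
    (c : Finset (Fin n) → ℕ) (T : Finset ℕ) (A : SignVector n p) : ℕ :=
  if M < α A.word then M + ∑ j ∈ T, #(A.colorSigns F c j) else α A.word

variable {α : List (ZMod p) → ℕ} {M w : ℕ}

theorem tuckerRank_mem (hα : IsSignRank α) (hedge : ∀ x, ¬HasMonochromaticEdge (ZMod p) F c x)
    (hlarge : ∀ A : SignVector n p, M < α A.word → w < ∑ j ∈ T, #(A.colorSigns F c j))
    (A : SignVector n p) :
    tuckerRank α M F c T A ∈ Ioc 0 M ∪ Ioc (M + w) (M + (p - 1) * #T) := by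
  have hpos : 0 < α A.word := hα.pos A.word_ne_nil
  have hle : ∑ j ∈ T, #(A.colorSigns F c j) ≤ (p - 1) * #T := sum_card_colorSigns_le hedge A
  rw [mem_union, mem_Ioc, mem_Ioc]
  by_cases hA : M < α A.word
  · have hwA := hlarge A hA
    rw [tuckerRank, if_pos hA]
    omega
  · rw [tuckerRank, if_neg hA]
    omega

section Prime

variable {p : ℕ} [Fact p.Prime] {α : List (ZMod p) → ℕ}

/-- The sign of the label of `A` that goes with the absolute value `tuckerRank`: the first letter of
the word of `A` if its rank is at most `M`, and otherwise the sign of the family of the color signs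
of `A`. -/
noncomputable def tuckerSign (α : List (ZMod p) → ℕ) (M : ℕ)
    (F : Finset (Finset (Fin n))) (c : Finset (Fin n) → ℕ) (A : SignVector n p) : ZMod p :=
  if M < α A.word then familySign (A.colorSigns F c) else A.firstSign

theorem semiconj_tuckerSign (hα : IsSignRank α)
    (hedge : ∀ x, ¬HasMonochromaticEdge (ZMod p) F c x)
    (hlarge : ∀ A : SignVector n p, M < α A.word → w < ∑ j ∈ T, #(A.colorSigns F c j)) :
    Function.Semiconj (tuckerSign α M F c) (rotate : SignVector n p → _) (· + 1) := by
  intro A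
  by_cases hA : M < α A.word
  · have hnonempty : ∃ j, (A.colorSigns F c j).Nonempty := by
      obtain ⟨j, -, hj⟩ := exists_ne_zero_of_sum_ne_zero (Nat.ne_zero_of_lt (hlarge A hA))
      exact ⟨j, card_ne_zero.1 hj⟩
    simp only [tuckerSign, word_rotate, hα.map_add_one, if_pos hA, colorSigns_rotate]
    exact familySign_image_add_one (colorSigns_ne_univ hedge A) hnonempty
  · simp only [tuckerSign, word_rotate, hα.map_add_one, if_neg hA, firstSign_rotate]

theorem tuckerRank_lt_tuckerRank (hα : IsSignRank α) (hc : ∀ B ∈ F, c B ∈ T)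
    (hlarge : ∀ A : SignVector n p, M < α A.word → w < ∑ j ∈ T, #(A.colorSigns F c j))
    {A B : SignVector n p} (hAB : A ≤ B) (hne : tuckerSign α M F c A ≠ tuckerSign α M F c B) :
    tuckerRank α M F c T A < tuckerRank α M F c T B := by
  have hmono : α A.word ≤ α B.word := hα.mono (word_sublist_word hAB)
  by_cases hB : M < α B.word
  · have hwB := hlarge B hB
    by_cases hA : M < α A.word
    · simp only [tuckerSign, tuckerRank, if_pos hA, if_pos hB] at hne ⊢
      exact Nat.add_lt_add_left (sum_card_colorSigns_lt hc hAB (ne_of_apply_ne _ hne)) M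
    · simp only [tuckerRank, if_neg hA, if_pos hB]
      omega
  · have hA : ¬M < α A.word := by omega
    simp only [tuckerSign, tuckerRank, if_neg hA, if_neg hB] at hne ⊢
    exact hmono.lt_of_ne (mt (hα.firstSign_eq hAB) hne)

end Prime

end SignVector

open SignVector in
theorem IsSignRank.le_of_forall_not_hasMonochromaticEdge {n p : ℕ} [Fact p.Prime]
    {F : Finset (Finset (Fin n))} {c : Finset (Fin n) → ℕ} {T : Finset ℕ} {M w : ℕ}
    {α : List (ZMod p) → ℕ} (hα : IsSignRank α) (hc : ∀ B ∈ F, c B ∈ T)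
    (hedge : ∀ x, ¬HasMonochromaticEdge (ZMod p) F c x)
    (hlarge : ∀ A : SignVector n p, M < α A.word →
      ∃ U : Finset (ZMod p), w < #U ∧ ∀ x ∈ U, ∃ B ∈ F, ∀ i ∈ B, A i = some x) :
    n ≤ M + ((p - 1) * #T - w) := by
  have hsum (A : SignVector n p) (hA : M < α A.word) : w < ∑ j ∈ T, #(A.colorSigns F c j) := by
    obtain ⟨U, hw, hU⟩ := hlarge A hA
    exact hw.trans_le (card_le_sum_card_colorSigns hc hU)
  calc n ≤ #(Ioc 0 M ∪ Ioc (M + w) (M + (p - 1) * #T)) :=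
        le_card_of_lt_of_sign_ne (Fact.out : p.Prime).two_le (semiconj_tuckerSign hα hedge hsum)
          (fun _ _ => tuckerRank_lt_tuckerRank hα hc hsum) (tuckerRank_mem hα hedge hsum)
    _ ≤ #(Ioc 0 M) + #(Ioc (M + w) (M + (p - 1) * #T)) := card_union_le _ _
    _ = M + ((p - 1) * #T - w) := by simp only [Nat.card_Ioc, Nat.sub_zero, Nat.add_sub_add_left]

/-! ### Stable sets -/

theorem stable_iff {n s : ℕ} {A : Finset (Fin n)} : Stable n s A ↔
    ∀ i ∈ A, ∀ j ∈ A, i < j → i.val + s ≤ j.val ∧ j.val + s ≤ n + i.val := by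
  constructor
  · intro h i hi j hj hij
    have hs := h i hi j hj hij.ne
    omega
  · intro h i hi j hj hij
    rcases lt_or_gt_of_ne hij with hlt | hlt
    · have hs := h i hi j hj hlt
      omega
    · have hs := h j hj i hi hlt
      omega

theorem stable_one {n : ℕ} (A : Finset (Fin n)) : Stable n 1 A :=
  stable_iff.2 fun i _ j _ hij => by omega

theorem mem_stableSets {n s k : ℕ} {A : Finset (Fin n)} :
    A ∈ stableSets n s k ↔ #A = k ∧ Stable n s A := by
  simp [stableSets]

namespace Stable

variable {m n s s₁ s₂ k : ℕ} {f : Fin m → Fin n}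

theorem add_mul_le_of_le (hf : StrictMono f) (hs : Stable n s (univ.image f)) {i j : Fin m}
    (hij : i ≤ j) : (f i).val + s * j.val ≤ (f j).val + s * i.val := by
  obtain ⟨j, hj⟩ := j
  induction j with
  | zero =>
    have hi : i = ⟨0, hj⟩ := Fin.ext (Nat.le_zero.1 hij)
    rw [hi]
  | succ j ih =>
    rcases hij.eq_or_lt with hi | hi
    · rw [← hi]
    have hprev := ih (by omega) (Nat.lt_succ_iff.1 hi)
    have hlt : (⟨j, by omega⟩ : Fin m) < ⟨j + 1, hj⟩ := Fin.mk_lt_mk.2 j.lt_succ_self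
    have hstep := (stable_iff.1 hs _ (mem_image_of_mem f (mem_univ _)) _
      (mem_image_of_mem f (mem_univ _)) (hf hlt)).1
    simp only [Nat.mul_succ] at hprev hstep ⊢
    omega

theorem add_mul_le_of_lt (hf : StrictMono f) (hs : Stable n s (univ.image f)) {i j : Fin m}
    (hij : i < j) : (f j).val + s * (m + i.val) ≤ n + (f i).val + s * j.val := by
  obtain ⟨m, rfl⟩ := Nat.exists_eq_succ_of_ne_zero i.pos.ne'
  have hfirst := add_mul_le_of_le hf hs (Fin.zero_le i)
  have hlast := add_mul_le_of_le hf hs (Fin.le_last j)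
  have hwrap := (stable_iff.1 hs _ (mem_image_of_mem f (mem_univ 0)) _
    (mem_image_of_mem f (mem_univ (Fin.last m)))
    (hf ((Fin.zero_le i).trans_lt (hij.trans_le (Fin.le_last j))))).2
  rw [Nat.mul_add, Nat.mul_succ]
  simp only [Fin.val_zero, Fin.val_last, Nat.mul_zero] at hfirst hlast
  omega

theorem image (hf : StrictMono f) (hs : Stable n s₁ (univ.image f)) {B : Finset (Fin m)}
    (hB : Stable m s₂ B) : Stable n (s₁ * s₂) (B.image f) := by
  simp only [stable_iff, forall_mem_image]
  intro i hi j hj hij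
  replace hij : i < j := hf.lt_iff_lt.1 hij
  obtain ⟨hgap, hwrap⟩ := stable_iff.1 hB i hi j hj hij
  have hfgap := add_mul_le_of_le hf hs hij.le
  have hfwrap := add_mul_le_of_lt hf hs hij
  have hmul_gap := Nat.mul_le_mul_left s₁ hgap
  have hmul_wrap := Nat.mul_le_mul_left s₁ hwrap
  simp only [Nat.mul_add] at hmul_gap hmul_wrap hfwrap
  omega

theorem image_mem_stableSets (hf : StrictMono f) (hs : Stable n s₁ (univ.image f))
    {B : Finset (Fin m)} (hB : B ∈ stableSets m s₂ k) : B.image f ∈ stableSets n (s₁ * s₂) k := by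
  obtain ⟨hcard, hstable⟩ := mem_stableSets.1 hB
  exact mem_stableSets.2
    ⟨(card_image_of_injective B hf.injective).trans hcard, image hf hs hstable⟩

end Stable

/-- Every coloring of the `s`-stable `k`-subsets of `[n]` has a monochromatic edge of `r` disjoint
sets as soon as the number `t` of colors satisfies `(r - 1) t + r (k - 1) < n`. -/
def ForcesMonochromaticEdge (s r : ℕ) : Prop :=
  ∀ ⦃n k : ℕ⦄ ⦃T : Finset ℕ⦄ ⦃c : Finset (Fin n) → ℕ⦄, 1 ≤ k → T.Nonempty →
    (r - 1) * #T + r * (k - 1) < n → (∀ B ∈ stableSets n s k, c B ∈ T) →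
      ∃ x, HasMonochromaticEdge (Fin r) (stableSets n s k) c x

theorem forcesMonochromaticEdge_one_one : ForcesMonochromaticEdge 1 1 := by
  intro n k T c hk _ hn _
  have hkn : k ≤ #(univ : Finset (Fin n)) := by
    rw [card_fin]
    omega
  obtain ⟨B, -, hB⟩ := exists_subset_card_eq hkn
  exact ⟨c B, fun _ => B, fun _ => mem_stableSets.2 ⟨hB, stable_one B⟩,
    Subsingleton.pairwise, fun _ => rfl⟩

theorem SignVector.exists_mem_stableSets_one {n p k : ℕ} [NeZero p] {A : SignVector n p}
    (hA : p * (k - 1) < A.word.length) :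
    ∃ x, ∃ B ∈ stableSets n 1 k, ∀ i ∈ B, A i = some x := by
  obtain ⟨x, hx⟩ : ∃ x, k ≤ A.word.count x := by
    by_contra! hcount
    have hsum : ∑ x, A.word.count x ≤ p * (k - 1) := by
      simpa using sum_le_card_nsmul univ A.word.count (k - 1) fun x _ =>
        Nat.le_sub_one_of_lt (hcount x)
    have hlength : ∑ x, A.word.count x = A.word.length := by
      simpa using Multiset.sum_count_eq_card (s := univ) (m := (A.word : Multiset (ZMod p)))
        fun x _ => mem_univ x
    omega
  obtain ⟨f, hf, hfA⟩ := exists_strictMono_of_sublist_word (List.replicate_sublist_iff.2 hx)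
  refine ⟨x, univ.image f, mem_stableSets.2 ⟨?_, stable_one _⟩, ?_⟩
  · rw [card_image_of_injective _ hf.injective, card_fin, List.length_replicate]
  · simp only [forall_mem_image]
    exact fun i _ => by simpa using hfA i

theorem forcesMonochromaticEdge_one_prime (p : ℕ) [Fact p.Prime] : ForcesMonochromaticEdge 1 p := by
  intro n k T c _ _ hn hc
  by_contra! hedge
  have hbound : n ≤ p * (k - 1) + ((p - 1) * #T - 0) := by
    refine isSignRank_length.le_of_forall_not_hasMonochromaticEdge hc
      (fun x h => hedge x (h.of_equiv (ZMod.finEquiv p).toEquiv)) fun A hA => ?_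
    obtain ⟨x, hx⟩ := SignVector.exists_mem_stableSets_one hA
    exact ⟨{x}, by simp, by simpa using hx⟩
  omega

theorem exists_getElem_eq_add_natCast {l : List (ZMod 2)} (hl : l.IsChain (· ≠ ·)) :
    ∃ y, ∀ i (hi : i < l.length), l[i] = y + (i : ZMod 2) := by
  cases l with
  | nil => exact ⟨0, by simp⟩
  | cons y l =>
    refine ⟨y, fun i hi => ?_⟩
    induction i with
    | zero => simp
    | succ i ih =>
      have hne : ∀ x y : ZMod 2, x ≠ y → y = x + 1 := by decide
      rw [hne _ _ (hl.getElem i hi), ih (by omega), Nat.cast_succ, add_assoc]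

theorem exists_mem_stableSets_two_natCast_eq (k : ℕ) (y : ZMod 2) :
    ∃ B ∈ stableSets (2 * k) 2 k, ∀ i ∈ B, (i.val : ZMod 2) = y := by
  have hy : y.val < 2 := y.val_lt
  let f (i : Fin k) : Fin (2 * k) := ⟨2 * i.val + y.val, by omega⟩
  have hf : StrictMono f := fun i j hij => by
    simp only [f, Fin.mk_lt_mk]
    omega
  refine ⟨univ.image f, mem_stableSets.2 ⟨?_, stable_iff.2 ?_⟩, ?_⟩
  · rw [card_image_of_injective _ hf.injective, card_fin]
  · simp only [forall_mem_image, hf.lt_iff_lt]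
    intro i _ j _ hij
    simp only [f]
    omega
  · have htwo : (2 : ZMod 2) = 0 := ZMod.natCast_self 2
    simp [f, htwo]

theorem SignVector.exists_mem_stableSets_two {n k : ℕ} {A : SignVector n 2}
    (hA : 2 * k ≤ (A.word.destutter (· ≠ ·)).length) (x : ZMod 2) :
    ∃ B ∈ stableSets n 2 k, ∀ i ∈ B, A i = some x := by
  obtain ⟨f, hf, hfA⟩ := exists_strictMono_of_sublist_word
    (List.destutter_sublist (· ≠ ·) A.word)
  obtain ⟨y, hy⟩ := exists_getElem_eq_add_natCast (List.isChain_destutter (· ≠ ·) A.word)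
  obtain ⟨B, hB, hBx⟩ := exists_mem_stableSets_two_natCast_eq k (x - y)
  have hg : StrictMono (f ∘ Fin.castLE hA) := hf.comp (Fin.strictMono_castLE hA)
  refine ⟨B.image (f ∘ Fin.castLE hA), ?_, ?_⟩
  · simpa only [one_mul] using Stable.image_mem_stableSets hg (stable_one _) hB
  · simp only [forall_mem_image, Function.comp_apply, hfA, List.get_eq_getElem, Fin.val_castLE]
    intro i hi
    rw [hy, hBx i hi, add_sub_cancel]

theorem forcesMonochromaticEdge_two_two : ForcesMonochromaticEdge 2 2 := by
  intro n k T c hk hT hn hc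
  by_contra! hedge
  have hbound : n ≤ 2 * k - 1 + ((2 - 1) * #T - 1) :=
    isSignRank_length_destutter_ne.le_of_forall_not_hasMonochromaticEdge hc hedge
      fun A hA => ⟨univ, by simp, fun x _ => SignVector.exists_mem_stableSets_two (by omega) x⟩
  have hpos := hT.card_pos
  omega

theorem HasMonochromaticEdge.prod {ι κ : Type*} {n : ℕ} {F G : Finset (Finset (Fin n))}
    {c c' : Finset (Fin n) → ℕ} {x : ℕ} (h : HasMonochromaticEdge ι G c' x)
    (hG : ∀ A ∈ G, c' A = x → HasMonochromaticEdge κ {B ∈ F | B ⊆ A} c x) :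
    HasMonochromaticEdge (ι × κ) F c x := by
  obtain ⟨f, hfG, hfdisj, hfx⟩ := h
  choose g hgF hgdisj hgx using fun i => hG (f i) (hfG i) (hfx i)
  have hgsub : ∀ i j, g i j ⊆ f i := fun i j => (mem_filter.1 (hgF i j)).2
  refine ⟨fun ij => g ij.1 ij.2, fun ij => (mem_filter.1 (hgF ij.1 ij.2)).1, ?_,
    fun ij => hgx ij.1 ij.2⟩
  rintro ⟨i, j⟩ ⟨i', j'⟩ hne
  rcases eq_or_ne i i' with rfl | hi
  · exact hgdisj i fun hj => hne (congrArg (Prod.mk i) hj)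
  · exact disjoint_of_subset_left (hgsub i j) (disjoint_of_subset_right (hgsub i' j') (hfdisj hi))

namespace ForcesMonochromaticEdge

variable {s s₁ s₂ r r₁ r₂ : ℕ}

theorem exists_hasMonochromaticEdge_subset (h : ForcesMonochromaticEdge s₂ r₂) (hr₂ : 1 ≤ r₂)
    {n m k : ℕ} (hk : 1 ≤ k) {T : Finset ℕ} (hT : T.Nonempty)
    (hm : (r₂ - 1) * #T + r₂ * (k - 1) < m) {c : Finset (Fin n) → ℕ}
    (hc : ∀ B ∈ stableSets n (s₁ * s₂) k, c B ∈ T) {A : Finset (Fin n)}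
    (hA : A ∈ stableSets n s₁ m) :
    ∃ x ∈ T, HasMonochromaticEdge (Fin r₂) {B ∈ stableSets n (s₁ * s₂) k | B ⊆ A} c x := by
  obtain ⟨hcard, hstable⟩ := mem_stableSets.1 hA
  let e := A.orderEmbOfFin hcard
  have himage : univ.image e = A := image_orderEmbOfFin_univ A hcard
  have hmem : ∀ B ∈ stableSets m s₂ k, B.image e ∈ stableSets n (s₁ * s₂) k := fun B hB =>
    Stable.image_mem_stableSets e.strictMono (himage.symm ▸ hstable) hB
  obtain ⟨x, f, hf, hfdisj, hfx⟩ := h hk hT hm fun B hB => hc _ (hmem B hB)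
  refine ⟨x, hfx ⟨0, hr₂⟩ ▸ hc _ (hmem _ (hf _)), fun i => (f i).image e, fun i => ?_,
    fun i j hij => (disjoint_image e.injective).2 (hfdisj hij), hfx⟩
  exact mem_filter.2
    ⟨hmem _ (hf i), (image_subset_image (subset_univ _)).trans_eq himage⟩

theorem mul (h₁ : ForcesMonochromaticEdge s₁ r₁) (h₂ : ForcesMonochromaticEdge s₂ r₂)
    (hr₁ : 1 ≤ r₁) (hr₂ : 1 ≤ r₂) : ForcesMonochromaticEdge (s₁ * s₂) (r₁ * r₂) := by
  intro n k T c hk hT hn hc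
  set m := (r₂ - 1) * #T + r₂ * (k - 1) + 1 with hm
  choose! c' hc'T hc' using fun A (hA : A ∈ stableSets n s₁ m) =>
    h₂.exists_hasMonochromaticEdge_subset hr₂ hk hT (Nat.lt_succ_self _) hc hA
  have hn₁ : (r₁ - 1) * #T + r₁ * (m - 1) < n := by
    obtain ⟨q₁, rfl⟩ := Nat.exists_eq_add_of_le' hr₁
    obtain ⟨q₂, rfl⟩ := Nat.exists_eq_add_of_le' hr₂
    have hpred : (q₁ + 1) * (q₂ + 1) - 1 = q₁ + (q₁ + 1) * q₂ := by
      rw [Nat.mul_succ]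
      omega
    rw [hpred] at hn
    simp only [hm, Nat.add_sub_cancel]
    linarith
  obtain ⟨x, hx⟩ := h₁ (Nat.succ_pos _) hT hn₁ hc'T
  exact ⟨x, (hx.prod fun A hA hAx => hAx ▸ hc' A hA).of_equiv finProdFinEquiv.symm⟩

theorem one_of_pos (hr : 0 < r) : ForcesMonochromaticEdge 1 r := by
  induction r using Nat.recOnMul with
  | zero => exact absurd hr (lt_irrefl 0)
  | one => exact forcesMonochromaticEdge_one_one
  | prime p hp =>
    have : Fact p.Prime := ⟨hp⟩
    exact forcesMonochromaticEdge_one_prime p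
  | mul r₁ r₂ ih₁ ih₂ =>
    have hr₁ := Nat.pos_of_mul_pos_right hr
    have hr₂ := Nat.pos_of_mul_pos_left hr
    exact mul (ih₁ hr₁) (ih₂ hr₂) hr₁ hr₂

theorem two_pow_two_pow (a : ℕ) : ForcesMonochromaticEdge (2 ^ a) (2 ^ a) := by
  induction a with
  | zero => exact forcesMonochromaticEdge_one_one
  | succ a ih => exact mul ih forcesMonochromaticEdge_two_two Nat.one_le_two_pow one_le_two

theorem two_pow_of_dvd {a : ℕ} (hr : 0 < r) (ha : 2 ^ a ∣ r) :
    ForcesMonochromaticEdge (2 ^ a) r := by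
  obtain ⟨m, rfl⟩ := ha
  have hm : 0 < m := Nat.pos_of_mul_pos_left hr
  simpa only [mul_one] using mul (two_pow_two_pow a) (one_of_pos hm) Nat.one_le_two_pow hm

end ForcesMonochromaticEdge

/-! ### The chromatic number -/

theorem IsKneserColoring.not_hasMonochromaticEdge {n r t : ℕ} {F : Finset (Finset (Fin n))}
    {c : Finset (Fin n) → ℕ} (hc : IsKneserColoring n r t F c) (hF : ∀ A ∈ F, A.Nonempty)
    (x : ℕ) : ¬HasMonochromaticEdge (Fin r) F c x := by
  rintro ⟨f, hf, hdisj, hx⟩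
  have hinj : Function.Injective f := fun i j hij => by
    by_contra hne
    exact (hF _ (hf j)).ne_empty (disjoint_self.1 ((hdisj hne).mono_left hij.ge))
  refine hc.2 (univ.image f) ?_ ?_ ?_ ⟨x, by simpa using hx⟩
  · exact image_subset_iff.2 fun i _ => hf i
  · rw [card_image_of_injective _ hinj, card_fin]
  · rw [coe_image, coe_univ, Set.image_univ]
    exact hdisj.range_pairwise

theorem ForcesMonochromaticEdge.le_of_isKneserColoring {n k r s t : ℕ}
    (h : ForcesMonochromaticEdge s r) (hr : 1 ≤ r) (hk : 1 ≤ k) (hrk : r * k ≤ n)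
    {c : Finset (Fin n) → ℕ} (hc : IsKneserColoring n r t (stableSets n s k) c) :
    n ≤ (r - 1) * t + r * (k - 1) := by
  by_contra! hlt
  obtain ⟨k, rfl⟩ := Nat.exists_eq_add_of_le' hk
  have hcard : (r - 1) * #(Icc 1 (max t 1)) + r * (k + 1 - 1) < n := by
    rw [Nat.card_Icc, Nat.add_sub_cancel]
    rcases Nat.eq_zero_or_pos t with rfl | ht
    · rw [Nat.mul_succ] at hrk
      simp only [zero_le, sup_of_le_right, mul_one, Nat.add_sub_cancel]
      omega
    · rwa [max_eq_left ht]
  have hcolors : ∀ B ∈ stableSets n s (k + 1), c B ∈ Icc 1 (max t 1) := fun B hB =>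
    Icc_subset_Icc_right (le_max_left t 1) (hc.1 B hB)
  obtain ⟨x, hx⟩ := h hk ⟨1, by simp⟩ hcard hcolors
  refine hc.not_hasMonochromaticEdge (fun A hA => ?_) x hx
  exact card_pos.1 ((mem_stableSets.1 hA).1 ▸ k.succ_pos)

/-- The least element of a subset of `[n]`, as a natural number; the empty set is given the junk
value `0`. -/
noncomputable def minVal {n : ℕ} (A : Finset (Fin n)) : ℕ :=
  sInf (Fin.val '' (A : Set (Fin n)))

theorem minVal_le {n : ℕ} {A : Finset (Fin n)} {i : Fin n} (hi : i ∈ A) : minVal A ≤ i :=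
  Nat.sInf_le ⟨i, hi, rfl⟩

theorem exists_mem_val_eq_minVal {n : ℕ} {A : Finset (Fin n)} (hA : A.Nonempty) :
    ∃ i ∈ A, i.val = minVal A :=
  Nat.sInf_mem (hA.to_set.image Fin.val)

section PairwiseDisjoint

variable {n k : ℕ} {E : Finset (Finset (Fin n))}
  (hE : (E : Set (Finset (Fin n))).Pairwise fun A B => Disjoint A B)

include hE

theorem card_le_of_minVal_div_eq (hne : ∀ A ∈ E, A.Nonempty) {d q : ℕ} (hd : 0 < d)
    (hq : ∀ A ∈ E, minVal A / d = q) : #E ≤ d := by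
  have hinj : Set.InjOn minVal (E : Set (Finset (Fin n))) := fun A hA B hB hAB => by
    by_contra hABne
    obtain ⟨i, hi, hiA⟩ := exists_mem_val_eq_minVal (hne A hA)
    obtain ⟨j, hj, hjB⟩ := exists_mem_val_eq_minVal (hne B hB)
    have hij : i = j := Fin.ext (by rw [hiA, hjB, hAB])
    exact disjoint_left.1 (hE hA hB hABne) hi (hij ▸ hj)
  have hmaps : Set.MapsTo minVal (E : Set (Finset (Fin n))) (Ico (d * q) (d * q + d)) :=
    fun A hA => by
      have hdiv := Nat.div_add_mod (minVal A) d
      have hmod := Nat.mod_lt (minVal A) hd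
      rw [hq A hA] at hdiv
      rw [coe_Ico, Set.mem_Ico]
      omega
  simpa using card_le_card_of_injOn minVal hmaps hinj

theorem card_mul_add_le_of_le_minVal (hcard : ∀ A ∈ E, #A = k) {b : ℕ}
    (hb : ∀ A ∈ E, b ≤ minVal A) : #E * k ≤ n - b := by
  have hunion : #(E.biUnion id) = #E * k := by
    simpa only [id_eq, sum_const_nat hcard] using card_biUnion (t := id) hE
  have hmaps : Set.MapsTo Fin.val (E.biUnion id : Set (Fin n)) (Ico b n) := fun i hi => by
    obtain ⟨A, hA, hiA⟩ := mem_biUnion.1 hi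
    exact mem_coe.2 (mem_Ico.2 ⟨(hb A hA).trans (minVal_le hiA), i.isLt⟩)
  rw [← hunion, ← Nat.card_Ico]
  exact card_le_card_of_injOn Fin.val hmaps Fin.val_injective.injOn

end PairwiseDisjoint

theorem isKneserColoring_min {n k r t : ℕ} {F : Finset (Finset (Fin n))} (hr : 2 ≤ r)
    (hk : 1 ≤ k) (ht : 1 ≤ t) (hF : ∀ A ∈ F, #A = k) (hn : n ≤ (r - 1) * t + r * (k - 1)) :
    IsKneserColoring n r t F fun A => min (minVal A / (r - 1) + 1) t := by
  refine ⟨fun A _ => mem_Icc.2 ⟨le_min (Nat.le_add_left 1 _) ht, min_le_right _ _⟩, ?_⟩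
  rintro E hEF rfl hdisj ⟨x, hx⟩
  rcases lt_or_ge x t with hxt | hxt
  · have hdiv : ∀ A ∈ E, minVal A / (#E - 1) = x - 1 := fun A hA => by
      have hcolor : min (minVal A / (#E - 1) + 1) t = x := hx A hA
      generalize minVal A / (#E - 1) = q at hcolor ⊢
      omega
    have hcard := card_le_of_minVal_div_eq hdisj
      (fun A hA => card_pos.1 (hF A (hEF hA) ▸ hk)) (by omega) hdiv
    omega
  · have hmin : ∀ A ∈ E, (t - 1) * (#E - 1) ≤ minVal A := fun A hA => by
      rw [← Nat.le_div_iff_mul_le (by omega)]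
      have hcolor : min (minVal A / (#E - 1) + 1) t = x := hx A hA
      exact Nat.sub_le_of_le_add ((hxt.trans_eq hcolor.symm).trans (min_le_left _ _))
    have hcard := card_mul_add_le_of_le_minVal hdisj (fun A hA => hF A (hEF hA)) hmin
    obtain ⟨t, rfl⟩ := Nat.exists_eq_add_of_le' ht
    obtain ⟨k, rfl⟩ := Nat.exists_eq_add_of_le' hk
    simp only [Nat.add_sub_cancel, Nat.mul_succ, mul_comm t] at hcard hn
    omega

theorem le_mul_add_iff_div_le {n k r t : ℕ} (hr : 2 ≤ r) (hk : 1 ≤ k) :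
    n ≤ (r - 1) * t + r * (k - 1) ↔
      ((n : ℚ) - r * ((k : ℚ) - 1)) / ((r : ℚ) - 1) ≤ t := by
  have hpos : (0 : ℚ) < (r : ℚ) - 1 := sub_pos.2 (Nat.one_lt_cast.2 hr)
  rw [div_le_iff₀ hpos, sub_le_iff_le_add, mul_comm (t : ℚ), ← Nat.cast_pred hk,
    ← Nat.cast_pred (zero_lt_two.trans_le hr)]
  norm_cast

theorem ForcesMonochromaticEdge.kneserChrom_eq {n k r s : ℕ} (h : ForcesMonochromaticEdge s r)
    (hr : 2 ≤ r) (hk : 1 ≤ k) (hrk : r * k ≤ n) :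
    kneserChrom n r (stableSets n s k) =
      ⌈((n : ℚ) - r * ((k : ℚ) - 1)) / ((r : ℚ) - 1)⌉₊ := by
  have hcolorable : ∀ t, (∃ c, IsKneserColoring n r t (stableSets n s k) c) ↔
      n ≤ (r - 1) * t + r * (k - 1) := fun t => by
    refine ⟨fun ⟨c, hc⟩ => h.le_of_isKneserColoring (one_le_two.trans hr) hk hrk hc, fun hn =>
      ⟨_, isKneserColoring_min hr hk ?_ (fun A hA => (mem_stableSets.1 hA).1) hn⟩⟩
    by_contra! ht
    obtain rfl : t = 0 := Nat.lt_one_iff.1 ht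
    have hlt : r * (k - 1) < r * k := Nat.mul_lt_mul_of_pos_left (by omega) (by omega)
    omega
  simp only [kneserChrom, hcolorable, le_mul_add_iff_div_le hr hk, ← Nat.ceil_le]
  exact csInf_Ici

theorem stmt15_general (a k n r : ℕ) (hk : 1 ≤ k) (hr : 2 ≤ r) (hnrk : r * k ≤ n)
    (hdvd : 2 ^ a ∣ r) :
    (kneserChrom n r (stableSets n (2 ^ a) k) : ℤ) =
      ⌈((n : ℚ) - (r : ℚ) * ((k : ℚ) - 1)) / ((r : ℚ) - 1)⌉ := by
  have hforces := ForcesMonochromaticEdge.two_pow_of_dvd (zero_lt_two.trans_le hr) hdvd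
  have hkn : (r : ℚ) * k ≤ n := by exact_mod_cast hnrk
  have hr' : (1 : ℚ) < r := by exact_mod_cast hr
  rw [hforces.kneserChrom_eq hr hk hnrk]
  exact Int.natCast_ceil_eq_ceil (div_nonneg (by linarith) (by linarith))

theorem stmt15 (a k n r : ℕ) (ha : 1 ≤ a) (hk : 1 ≤ k) (hn : 1 ≤ n) (hr : 1 ≤ r)
    (hnrk : r * k ≤ n) (hdvd : 2 ^ a ∣ r) :
    (kneserChrom n r (stableSets n (2 ^ a) k) : ℤ) =
      ⌈((n : ℚ) - (r : ℚ) * ((k : ℚ) - 1)) / ((r : ℚ) - 1)⌉ :=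
  stmt15_general a k n r hk ((Nat.le_self_pow (Nat.one_le_iff_ne_zero.1 ha) 2).trans
    (Nat.le_of_dvd hr hdvd)) hnrk hdvd
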